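/- arXiv:1902.09599 — 3 statements merged into one kernel-verified Lean document; each statement's English description precedes it below -/
import Mathlib

section
/- (Proposition 2) Let q be a mask distribution on M with support S_q = {m ∈ M : q(m) > 0}, and fix τ ∈ P. If x₁, x₂ : I → ℝ satisfy T_{q,τ} x₁ = T_{q,τ} x₂, then x₁([v]_m) = x₂([v]_m) for every v ∈ I and every m ∈ S_q; that is, the vector T_{q,τ} x determines all the marginals of x on supported masks. -/
/-!
The masked vector `f_τ(u, m')` lies in `[v]_m` exactly when `u ∈ [v]_{m ⊓ m'}` and `v` equals `τ` on
`m \ m'`. So the `m`-marginal of `T q τ x` is a combination, with weights `q m'`, of marginals of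
`x` on the masks `m ⊓ m'`. Those `m' ≥ m` all contribute the `m`-marginal itself, and every other
`m'` contributes a marginal on a strictly smaller mask. By induction on `m` the marginals can be
solved for one after the other, as long as the total weight `∑_{m' ≥ m} q m'` never vanishes, and
for nonnegative `q` this weight is positive at every mask below a supported one.
-/

open Finset
open scoped Classical

/-- The transition operator `T_{q,τ}`: for a mask distribution `q` on masks
`Fin n → Bool`, a fill-in value `τ`, and `x : (Fin n → P) → ℝ`,
`(T q τ x) v = ∑_{m} ∑_{u} q m * x u * [f_τ(u, m) = v]`, where the masking
operator is `f_τ(u,m) d = if m d then u d else τ`. -/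
noncomputable def T {n : ℕ} {P : Type*} [Fintype P] [DecidableEq P]
    (q : (Fin n → Bool) → ℝ) (τ : P) (x : (Fin n → P) → ℝ) : (Fin n → P) → ℝ :=
  fun v => ∑ m : Fin n → Bool, ∑ u : Fin n → P,
    q m * x u * (if (fun d => if m d then u d else τ) = v then (1 : ℝ) else 0)

/-- The marginal `x([v]_m) = ∑_{u ∈ [v]_m} x u`, where `u ∈ [v]_m` iff
`u` agrees with `v` on every coordinate observed by the mask `m`. -/
noncomputable def marg {n : ℕ} {P : Type*} [Fintype P] [DecidableEq P]
    (x : (Fin n → P) → ℝ) (m : Fin n → Bool) (v : Fin n → P) : ℝ :=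
  ∑ u : Fin n → P, if (∀ d, m d = true → v d = u d) then x u else 0

section UpperMass

variable {α R : Type*} [Preorder α] [Fintype α]

/-- The total weight `∑_{m' ≥ m} q m'` of the elements above `m`, which is the coefficient of
the `m`-marginal of `x` in that of `T q τ x`. For a mask distribution it is the probability that all
the coordinates of `m` are observed. -/
noncomputable def upperMass [AddCommMonoid R] (q : α → R) (m : α) : R :=
  ∑ m' with m ≤ m', q m'

lemma upperMass_pos [AddCommMonoid R] [PartialOrder R] [IsOrderedCancelAddMonoid R]
    {q : α → R} (hq : ∀ m, 0 ≤ q m) {m m₀ : α} (hle : m ≤ m₀) (hm₀ : 0 < q m₀) :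
    0 < upperMass q m :=
  sum_pos' (fun m' _ => hq m') ⟨m₀, by simpa using hle, hm₀⟩

end UpperMass

section AgreeOn

variable {ι P : Type*}

/-- The relation `v ~_m u`, whose classes are the `[v]_m`: `v` and `u` have the same observed
coordinates. -/
def AgreeOn (m : ι → Bool) (v u : ι → P) : Prop :=
  ∀ d, m d = true → v d = u d

/-- The masking operator `f_τ(u, m)`, with the mask placed before the vector so that
`maskFill τ m` is the map applied by `T`. -/
def maskFill (τ : P) (m : ι → Bool) (u : ι → P) : ι → P :=
  fun d => if m d then u d else τ

lemma agreeOn_maskFill_iff {τ : P} {m m' : ι → Bool} {v u : ι → P} :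
    AgreeOn m v (maskFill τ m' u) ↔
      AgreeOn (m \ m') v (fun _ => τ) ∧ AgreeOn (m ⊓ m') v u := by
  simp only [AgreeOn, ← forall_and]
  refine forall_congr' fun d => ?_
  cases hm : m d <;> cases hm' : m' d <;> simp [maskFill, hm, hm', disjoint_iff]

lemma agreeOn_sdiff_of_le {m m' : ι → Bool} (hle : m ≤ m') (v u : ι → P) :
    AgreeOn (m \ m') v u := by
  rw [sdiff_eq_bot_iff.mpr hle]
  simp [AgreeOn]

end AgreeOn

section Marginals

variable {n : ℕ} {P : Type*} [Fintype P] [DecidableEq P]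

lemma marg_eq_sum_filter (x : (Fin n → P) → ℝ) (m : Fin n → Bool) (v : Fin n → P) :
    marg x m v = ∑ u with AgreeOn m v u, x u := by
  rw [marg, sum_filter]
  exact sum_congr rfl fun u _ => if_congr Iff.rfl rfl rfl

lemma T_eq_sum_fiber (q : (Fin n → Bool) → ℝ) (τ : P) (x : (Fin n → P) → ℝ) (v : Fin n → P) :
    T q τ x v = ∑ m, q m * ∑ u with maskFill τ m u = v, x u := by
  simp only [T, sum_filter, mul_sum, mul_ite, mul_one, mul_zero]
  rfl

lemma sum_filter_agreeOn_maskFill (τ : P) (x : (Fin n → P) → ℝ) (m m' : Fin n → Bool)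
    (v : Fin n → P) :
    ∑ u with AgreeOn m v (maskFill τ m' u), x u =
      if AgreeOn (m \ m') v (fun _ => τ) then marg x (m ⊓ m') v else 0 := by
  split_ifs with hτ <;> simp [agreeOn_maskFill_iff, marg_eq_sum_filter, hτ]

lemma marg_T (q : (Fin n → Bool) → ℝ) (τ : P) (x : (Fin n → P) → ℝ) (m : Fin n → Bool)
    (v : Fin n → P) :
    marg (T q τ x) m v =
      ∑ m', q m' * if AgreeOn (m \ m') v (fun _ => τ) then marg x (m ⊓ m') v else 0 := by
  calc marg (T q τ x) m v
      = ∑ w with AgreeOn m v w, ∑ m', q m' * ∑ u with maskFill τ m' u = w, x u := by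
        simp only [marg_eq_sum_filter, T_eq_sum_fiber]
    _ = ∑ m', q m' * ∑ w with AgreeOn m v w, ∑ u with maskFill τ m' u = w, x u := by
        rw [sum_comm]
        simp only [mul_sum]
    _ = ∑ m', q m' * ∑ u with AgreeOn m v (maskFill τ m' u), x u := by
        simp only [sum_fiberwise_eq_sum_filter, mem_filter_univ]
    _ = _ := by simp only [sum_filter_agreeOn_maskFill]

lemma marg_T_eq_upperMass_mul_add (q : (Fin n → Bool) → ℝ) (τ : P) (x : (Fin n → P) → ℝ)
    (m : Fin n → Bool) (v : Fin n → P) :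
    marg (T q τ x) m v = upperMass q m * marg x m v +
      ∑ m' with ¬ m ≤ m',
        q m' * if AgreeOn (m \ m') v (fun _ => τ) then marg x (m ⊓ m') v else 0 := by
  rw [marg_T, ← sum_filter_add_sum_filter_not univ (m ≤ ·), upperMass, sum_mul]
  congr 1
  refine sum_congr rfl fun m' hm' => ?_
  have hle : m ≤ m' := (mem_filter.mp hm').2
  rw [if_pos (agreeOn_sdiff_of_le hle v _), inf_eq_left.mpr hle]

theorem stmt4_general {q : (Fin n → Bool) → ℝ} {τ : P} {x₁ x₂ : (Fin n → P) → ℝ}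
    (h : T q τ x₁ = T q τ x₂) {v : Fin n → P} {m : Fin n → Bool}
    (hq : ∀ m' ≤ m, upperMass q m' ≠ 0) : marg x₁ m v = marg x₂ m v := by
  induction m using WellFoundedLT.induction with
  | ind m ih =>
    have hlower : ∀ m', ¬ m ≤ m' → marg x₁ (m ⊓ m') v = marg x₂ (m ⊓ m') v := fun m' hle =>
      ih _ (inf_lt_left.mpr hle) fun m'' hm'' => hq m'' (hm''.trans inf_le_left)
    have hsum : (∑ m' with ¬ m ≤ m',
          q m' * if AgreeOn (m \ m') v (fun _ => τ) then marg x₁ (m ⊓ m') v else 0) =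
        ∑ m' with ¬ m ≤ m',
          q m' * if AgreeOn (m \ m') v (fun _ => τ) then marg x₂ (m ⊓ m') v else 0 :=
      sum_congr rfl fun m' hm' => by rw [hlower m' (mem_filter.mp hm').2]
    have htop : upperMass q m * marg x₁ m v = upperMass q m * marg x₂ m v := by
      have hT : marg (T q τ x₁) m v = marg (T q τ x₂) m v := by rw [h]
      rwa [marg_T_eq_upperMass_mul_add, marg_T_eq_upperMass_mul_add, hsum, add_left_inj] at hT
    exact mul_left_cancel₀ (hq m le_rfl) htop

end Marginals

/-- Proposition 2: `T_{q,τ} x` determines all the marginals of `x` on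
supported masks. -/
theorem stmt4 {n : ℕ} (hn : 1 ≤ n) {P : Type*} [Fintype P] [Nonempty P] [DecidableEq P]
    (q : (Fin n → Bool) → ℝ) (hq0 : ∀ m, 0 ≤ q m)
    (hq1 : (∑ m : Fin n → Bool, q m) = 1)
    (τ : P) (x₁ x₂ : (Fin n → P) → ℝ)
    (h : T q τ x₁ = T q τ x₂) :
    ∀ (v : Fin n → P) (m : Fin n → Bool), 0 < q m → marg x₁ m v = marg x₂ m v := fun _ _ hm =>
  stmt4_general h fun _ hle => (upperMass_pos hq0 hle hm).ne'
end

section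
/- Let q be a mask distribution on M with support S_q and fix τ ∈ P. A vector x : I → ℝ lies in the null space of the transition operator, T_{q,τ} x = 0, if and only if all of its marginals on supported masks vanish: x([v]_m) = 0 for every v ∈ I and every m ∈ S_q. -/
/-!
Let `E m` push `x` forward along masking by `m`. Then `T x = ∑ m, q m • E m x`, and `E m x = 0` says
exactly that the marginals of `x` on `m` vanish. Maskings are commuting idempotent maps, so the
`E m` are commuting idempotent operators, and for such operators a combination with nonnegative
weights kills only what is killed by each `E m` of positive weight: applying `E j` to
`(a + ∑ i, q i • E i) x = 0` absorbs the `j`-th term into the constant, giving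
`(a + q j + ∑ i ≠ j, q i • E i) (E j x) = 0`, and induction on the number of operators yields
`(a + q j) • E j x = 0`.
-/

open Finset
open scoped Classical

section CommutingIdempotents

variable {ι R V : Type*} [Semiring R] [PartialOrder R] [IsOrderedAddMonoid R] [IsCancelMulZero R]
  [AddCommMonoid V] [Module R V] [Module.IsTorsionFree R V] {E : ι → Module.End R V} {q : ι → R}

lemma apply_eq_zero_of_smul_add_sum_smul_apply_eq_zero (hidem : ∀ i, IsIdempotentElem (E i))
    (hcomm : ∀ i j, Commute (E i) (E j)) {s : Finset ι} (hq : ∀ i ∈ s, 0 ≤ q i) {a : R}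
    (ha : 0 ≤ a) {x : V} (hx : a • x + ∑ i ∈ s, q i • E i x = 0) :
    (0 < a → x = 0) ∧ ∀ i ∈ s, 0 < q i → E i x = 0 := by
  induction s using Finset.induction_on generalizing a x with
  | empty =>
    refine ⟨fun hapos => ?_, by simp⟩
    simpa [hapos.ne'] using hx
  | insert j s hj ih =>
    rw [Finset.forall_mem_insert] at hq ⊢
    obtain ⟨hqj, hqs⟩ := hq
    rw [Finset.sum_insert hj] at hx
    have hEj : (a + q j) • E j x + ∑ i ∈ s, q i • E i (E j x) = 0 := by
      have hjj : E j (E j x) = E j x := LinearMap.congr_fun (hidem j) x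
      have hji (i : ι) : E j (E i x) = E i (E j x) := LinearMap.congr_fun (hcomm j i) x
      simpa only [map_add, map_sum, map_smul, map_zero, hjj, hji, add_smul, add_assoc]
        using congrArg (E j) hx
    have hjx : 0 < q j → E j x = 0 := fun hpos =>
      (ih hqs (add_nonneg ha hqj) hEj).1 (hpos.trans_le (le_add_of_nonneg_left ha))
    have hterm : q j • E j x = 0 := by
      obtain hzero | hpos := hqj.eq_or_lt
      · rw [← hzero, zero_smul]
      · rw [hjx hpos, smul_zero]
    rw [hterm, zero_add] at hx
    obtain ⟨hax, hsx⟩ := ih hqs ha hx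
    exact ⟨hax, hjx, hsx⟩

theorem sum_smul_apply_eq_zero_iff_of_commute (hidem : ∀ i, IsIdempotentElem (E i))
    (hcomm : ∀ i j, Commute (E i) (E j)) {s : Finset ι} (hq : ∀ i ∈ s, 0 ≤ q i) {x : V} :
    ∑ i ∈ s, q i • E i x = 0 ↔ ∀ i ∈ s, 0 < q i → E i x = 0 := by
  refine ⟨fun hx => ?_, fun hx => Finset.sum_eq_zero fun i hi => ?_⟩
  · exact (apply_eq_zero_of_smul_add_sum_smul_apply_eq_zero hidem hcomm hq le_rfl (a := 0)
      (by rwa [zero_smul, zero_add])).2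
  · obtain hzero | hpos := (hq i hi).eq_or_lt
    · rw [← hzero, zero_smul]
    · rw [hx i hi hpos, smul_zero]

theorem sum_smul_mapDomain_eq_zero_iff_of_commute {X : Type*} {f : ι → X → X}
    (hidem : ∀ i, f i ∘ f i = f i) (hcomm : ∀ i j, Function.Commute (f i) (f j))
    {s : Finset ι} (hq : ∀ i ∈ s, 0 ≤ q i) {x : X →₀ V} :
    ∑ i ∈ s, q i • x.mapDomain (f i) = 0 ↔ ∀ i ∈ s, 0 < q i → x.mapDomain (f i) = 0 := by
  have hmul (i j : ι) : Finsupp.lmapDomain V R (f i) * Finsupp.lmapDomain V R (f j) =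
      Finsupp.lmapDomain V R (f i ∘ f j) := (Finsupp.lmapDomain_comp V R (f j) (f i)).symm
  refine sum_smul_apply_eq_zero_iff_of_commute (E := fun i => Finsupp.lmapDomain V R (f i))
    (fun i => ?_) (fun i j => ?_) hq
  · rw [IsIdempotentElem, hmul, hidem]
  · rw [Commute, SemiconjBy, hmul, hmul, (hcomm i j).comp_eq]

end CommutingIdempotents

section Masking

variable {ι : Type*} {P : ι → Type*}

/-- The masking operator `f_τ(u, m)`, with the mask first so that `mask τ m` is a self-map of the
data vectors; alphabet and fill-in value may vary with the coordinate. -/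
def mask (τ : ∀ i, P i) (m : ι → Bool) (u : ∀ i, P i) : ∀ i, P i :=
  fun i => if m i then u i else τ i

lemma mask_comp_self (τ : ∀ i, P i) (m : ι → Bool) : mask τ m ∘ mask τ m = mask τ m := by
  funext u i
  simp only [Function.comp_apply, mask]
  split_ifs <;> rfl

lemma mask_commute (τ : ∀ i, P i) (m m' : ι → Bool) : Function.Commute (mask τ m) (mask τ m') := by
  intro u
  funext i
  simp only [mask]
  split_ifs <;> rfl

lemma mask_eq_mask_iff {τ : ∀ i, P i} {m : ι → Bool} {u v : ∀ i, P i} :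
    mask τ m u = mask τ m v ↔ ∀ i, m i = true → v i = u i := by
  refine funext_iff.trans (forall_congr' fun i => ?_)
  by_cases hi : m i = true <;> simp [mask, hi, eq_comm]

variable {V : Type*} [AddCommMonoid V]

/-- The marginal `x([v]_m)` of a finitely supported weighting `x` of the data vectors; finite
support stands in for finiteness of the alphabets. -/
noncomputable def marginal (x : (∀ i, P i) →₀ V) (m : ι → Bool) (v : ∀ i, P i) : V :=
  x.sum fun u y => if ∀ i, m i = true → v i = u i then y else 0

lemma mapDomain_mask_apply_mask (τ : ∀ i, P i) (x : (∀ i, P i) →₀ V) (m : ι → Bool)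
    (v : ∀ i, P i) : x.mapDomain (mask τ m) (mask τ m v) = marginal x m v := by
  simp only [Finsupp.mapDomain, Finsupp.sum_apply, Finsupp.single_apply, mask_eq_mask_iff, marginal]

lemma mapDomain_mask_eq_zero_iff {τ : ∀ i, P i} {x : (∀ i, P i) →₀ V} {m : ι → Bool} :
    x.mapDomain (mask τ m) = 0 ↔ ∀ v, marginal x m v = 0 := by
  simp only [← mapDomain_mask_apply_mask τ]
  refine ⟨fun hx v => by rw [hx, Finsupp.zero_apply], fun hx => Finsupp.ext fun w => ?_⟩
  by_cases hw : w ∈ Set.range (mask τ m)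
  · obtain ⟨v, rfl⟩ := hw
    exact hx v
  · exact Finsupp.mapDomain_of_notMem_range x w hw

theorem stmt13_general {R : Type*} [Semiring R] [PartialOrder R] [IsOrderedAddMonoid R]
    [IsCancelMulZero R] [Module R V] [Module.IsTorsionFree R V] {s : Finset (ι → Bool)}
    {q : (ι → Bool) → R} (hq : ∀ m ∈ s, 0 ≤ q m) (τ : ∀ i, P i) (x : (∀ i, P i) →₀ V) :
    ∑ m ∈ s, q m • x.mapDomain (mask τ m) = 0 ↔
      ∀ v, ∀ m ∈ s, 0 < q m → marginal x m v = 0 := by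
  rw [sum_smul_mapDomain_eq_zero_iff_of_commute (mask_comp_self τ) (mask_commute τ) hq]
  simp only [mapDomain_mask_eq_zero_iff]
  exact ⟨fun h v m hm hpos => h m hm hpos v, fun h m hm hpos v => h v m hm hpos⟩

end Masking

section FiniteAlphabet

variable {n : ℕ} {P : Type*} [Fintype P] [DecidableEq P]

lemma T_eq_coe_sum_smul_mapDomain (q : (Fin n → Bool) → ℝ) (τ : P) (x : (Fin n → P) → ℝ) :
    T q τ x = ⇑(∑ m, q m • (Finsupp.equivFunOnFinite.symm x).mapDomain (mask (fun _ => τ) m)) := by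
  funext v
  simp only [T, Finsupp.finsetSum_apply, Finsupp.smul_apply, smul_eq_mul]
  refine Finset.sum_congr rfl fun m _ => ?_
  rw [Finsupp.mapDomain, Finsupp.sum_fintype _ _ (by simp), Finsupp.finsetSum_apply,
    Finset.mul_sum]
  refine Finset.sum_congr rfl fun u _ => ?_
  rw [Finsupp.single_apply, mul_assoc, mul_ite, mul_one, mul_zero]
  rfl

lemma marg_eq_marginal (x : (Fin n → P) → ℝ) (m : Fin n → Bool) (v : Fin n → P) :
    marg x m v = marginal (Finsupp.equivFunOnFinite.symm x) m v := by
  rw [marg, marginal, Finsupp.sum_fintype _ _ (by simp)]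
  -- The two conditions differ only in their `Decidable` instances.
  exact Finset.sum_congr rfl fun u _ => by congr

end FiniteAlphabet

/-- `x` lies in the null space of `T_{q,τ}` iff all of its marginals on
supported masks vanish. -/
theorem stmt13 {n : ℕ} (hn : 1 ≤ n) {P : Type*} [Fintype P] [Nonempty P] [DecidableEq P]
    (q : (Fin n → Bool) → ℝ) (hq0 : ∀ m, 0 ≤ q m)
    (hq1 : (∑ m : Fin n → Bool, q m) = 1)
    (τ : P) (x : (Fin n → P) → ℝ) :
    T q τ x = 0 ↔
      ∀ (v : Fin n → P) (m : Fin n → Bool), 0 < q m → marg x m v = 0 := by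
  simpa only [T_eq_coe_sum_smul_mapDomain, Finsupp.coe_eq_zero, marg_eq_marginal,
    Finset.mem_univ, true_imp_iff] using
    stmt13_general (s := univ) (fun m _ => hq0 m) (fun _ => τ) (Finsupp.equivFunOnFinite.symm x)
end

section
/- (Corollary 2, joint-with-mask form) Let q be a mask distribution on M and fix τ ∈ P. For x₁, x₂ : I → ℝ, the following are equivalent: (i) the distributions of the masked sample alone agree, i.e., T_{q,τ} x₁ = T_{q,τ} x₂; (ii) the joint distributions of the masked sample together with the mask agree, i.e., for every m ∈ M and every v ∈ I, q(m)·Σ_{u ∈ I, f_τ(u,m) = v} x₁(u) = q(m)·Σ_{u ∈ I, f_τ(u,m) = v} x₂(u). Consequently, observing the location of the missing values in addition to the masked samples provides no additional power to distinguish data distributions, and if the data distribution is not uniquely recoverable from masked samples alone it remains not uniquely recoverable when the missing-value locations are also observed. -/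
open Finset
open scoped Classical

/-!
Masking by `m` and then by `k` keeps exactly the coordinates observed by both, so the pushforwards
`A m` along masking satisfy `A k ∘ A m = A (k ⊓ m)`. Suppose `∑ m, q m • A m x = ∑ m, q m • A m y`
with positive weights. Applying `A k` to both sides turns every term with `k ≤ m` into
`q m • A k x`, and every other term into `q m • A (k ⊓ m) x`, where `k ⊓ m` lies below strictly more
masks of the support than `k` does. If these `A (k ⊓ m)` already agree on `x` and `y`, cancelling
leaves `(∑ m ≥ k, q m) • A k x = (∑ m ≥ k, q m) • A k y`, and the scalar is positive as soon as `k`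
lies below some mask of the support. The induction has to run over the whole lower closure of the
support, since `k ⊓ m` need not belong to the support itself.
-/

section InfAction

variable {M R E : Type*} [SemilatticeInf M] [Semiring R] [AddCommMonoid E] [Module R E]
  {A : M → E →ₗ[R] E} {q : M → R} {s : Finset M} {x y : E}

lemma apply_sum_smul_apply (hA : ∀ k m z, A k (A m z) = A (k ⊓ m) z) (k : M) (x : E) :
    A k (∑ m ∈ s, q m • A m x) =
      (∑ m ∈ s with k ≤ m, q m) • A k x + ∑ m ∈ s with ¬k ≤ m, q m • A (k ⊓ m) x := by
  have hge : ∑ m ∈ s with k ≤ m, q m • A (k ⊓ m) x = (∑ m ∈ s with k ≤ m, q m) • A k x := by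
    rw [sum_smul]
    refine sum_congr rfl fun m hm => ?_
    rw [inf_eq_left.mpr (mem_filter.mp hm).2]
  simp only [map_sum, map_smul, hA]
  rw [← hge, sum_filter_add_sum_filter_not]

lemma card_filter_not_inf_le_lt {k m : M} (hm : m ∈ s) (hkm : ¬k ≤ m) :
    #{l ∈ s | ¬k ⊓ m ≤ l} < #{l ∈ s | ¬k ≤ l} := by
  refine card_lt_card (ssubset_iff_of_subset ?_ |>.mpr ⟨m, by simp [hm, hkm], by simp⟩)
  exact monotone_filter_right s fun l _ hl hkl => hl (inf_le_left.trans hkl)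

variable [PartialOrder R] [IsOrderedAddMonoid R] [IsCancelMulZero R] [IsCancelAdd E]
  [Module.IsTorsionFree R E]

lemma apply_eq_apply_of_sum_smul_eq (hA : ∀ k m z, A k (A m z) = A (k ⊓ m) z)
    (hq : ∀ m ∈ s, 0 < q m) (h : ∑ m ∈ s, q m • A m x = ∑ m ∈ s, q m • A m y)
    {k m : M} (hm : m ∈ s) (hkm : k ≤ m) : A k x = A k y := by
  have hrest : ∑ l ∈ s with ¬k ≤ l, q l • A (k ⊓ l) x =
      ∑ l ∈ s with ¬k ≤ l, q l • A (k ⊓ l) y := by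
    refine sum_congr rfl fun l hl => ?_
    obtain ⟨hls, hkl⟩ := mem_filter.mp hl
    have := card_filter_not_inf_le_lt hls hkl
    rw [apply_eq_apply_of_sum_smul_eq hA hq h hls inf_le_right]
  have hsmul : (∑ l ∈ s with k ≤ l, q l) • A k x = (∑ l ∈ s with k ≤ l, q l) • A k y := by
    have hk := congrArg (A k) h
    rw [apply_sum_smul_apply hA, apply_sum_smul_apply hA, hrest] at hk
    exact add_right_cancel hk
  have hpos : 0 < ∑ l ∈ s with k ≤ l, q l :=
    (hq m hm).trans_le <| single_le_sum (fun l hl => (hq l (mem_filter.mp hl).1).le)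
      (mem_filter.mpr ⟨hm, hkm⟩)
  exact smul_right_injective E hpos.ne' hsmul
termination_by #{l ∈ s | ¬k ≤ l}

theorem sum_smul_apply_eq_iff (hA : ∀ k m z, A k (A m z) = A (k ⊓ m) z)
    (hq : ∀ m ∈ s, 0 ≤ q m) :
    ∑ m ∈ s, q m • A m x = ∑ m ∈ s, q m • A m y ↔ ∀ m ∈ s, q m • A m x = q m • A m y := by
  refine ⟨fun h m hm => ?_, sum_congr rfl⟩
  obtain hm0 | hmpos := (hq m hm).eq_or_lt
  · simp only [← hm0, zero_smul]
  have hsupp (z : E) : ∑ m ∈ s with 0 < q m, q m • A m z = ∑ m ∈ s, q m • A m z :=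
    sum_filter_of_ne fun l hl hne => (hq l hl).lt_of_ne' (left_ne_zero_of_smul hne)
  rw [← hsupp x, ← hsupp y] at h
  rw [apply_eq_apply_of_sum_smul_eq hA (fun l hl => (mem_filter.mp hl).2) h
    (mem_filter.mpr ⟨hm, hmpos⟩) le_rfl]

end InfAction

section Mask

variable {ι : Type*} {P : ι → Type*}

/-- The masking operator `f_τ(u, m)`: coordinates observed by `m` are kept, the others are replaced
by `τ`. Both the feature set and the fill-in value may depend on the coordinate. -/
def applyMask (τ : ∀ i, P i) (m : ι → Bool) (u : ∀ i, P i) : ∀ i, P i :=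
  fun i => if m i then u i else τ i

lemma applyMask_comp_applyMask (τ : ∀ i, P i) (k m : ι → Bool) :
    applyMask τ k ∘ applyMask τ m = applyMask τ (k ⊓ m) := by
  funext u i
  cases hk : k i <;> simp [applyMask, hk]

theorem stmt14_general {R E : Type*} [Semiring R] [PartialOrder R] [IsOrderedAddMonoid R]
    [IsCancelMulZero R] [AddCommMonoid E] [IsCancelAdd E] [Module R E] [Module.IsTorsionFree R E]
    {s : Finset (ι → Bool)} {q : (ι → Bool) → R} (hq : ∀ m ∈ s, 0 ≤ q m)
    (τ : ∀ i, P i) (x₁ x₂ : (∀ i, P i) →₀ E) :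
    ∑ m ∈ s, q m • x₁.mapDomain (applyMask τ m) = ∑ m ∈ s, q m • x₂.mapDomain (applyMask τ m) ↔
      ∀ m ∈ s, q m • x₁.mapDomain (applyMask τ m) = q m • x₂.mapDomain (applyMask τ m) :=
  sum_smul_apply_eq_iff (A := fun m => Finsupp.lmapDomain E R (applyMask τ m))
    (fun k m z => by
      simp only [Finsupp.lmapDomain_apply, ← Finsupp.mapDomain_comp, applyMask_comp_applyMask]) hq

end Mask

lemma mapDomain_equivFunOnFinite_symm_apply {α β E : Type*} [Fintype α] [DecidableEq β]
    [AddCommMonoid E] (f : α → β) (x : α → E) (b : β) :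
    (Finsupp.equivFunOnFinite.symm x).mapDomain f b = ∑ a, if f a = b then x a else 0 := by
  simp [Finsupp.mapDomain, Finsupp.sum_fintype, Finsupp.finsetSum_apply, Finsupp.single_apply]

lemma T_eq_sum_smul_mapDomain {n : ℕ} {P : Type*} [Fintype P] [DecidableEq P]
    (q : (Fin n → Bool) → ℝ) (τ : P) (x : (Fin n → P) → ℝ) :
    T q τ x =
      ⇑(∑ m, q m • (Finsupp.equivFunOnFinite.symm x).mapDomain (applyMask (fun _ => τ) m)) := by
  funext v
  unfold applyMask
  simp [T, mapDomain_equivFunOnFinite_symm_apply, Finsupp.finsetSum_apply, mul_sum]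

/-- Corollary 2 (joint-with-mask form): the distributions of the masked sample
alone agree iff the joint distributions of the masked sample together with the
mask agree. -/
theorem stmt14 {n : ℕ} (hn : 1 ≤ n) {P : Type*} [Fintype P] [Nonempty P] [DecidableEq P]
    (q : (Fin n → Bool) → ℝ) (hq0 : ∀ m, 0 ≤ q m)
    (hq1 : (∑ m : Fin n → Bool, q m) = 1)
    (τ : P) (x₁ x₂ : (Fin n → P) → ℝ) :
    T q τ x₁ = T q τ x₂ ↔
      ∀ (m : Fin n → Bool) (v : Fin n → P),
        q m * (∑ u : Fin n → P,
            if (fun d => if m d then u d else τ) = v then x₁ u else 0) =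
        q m * (∑ u : Fin n → P,
            if (fun d => if m d then u d else τ) = v then x₂ u else 0) := by
  rw [T_eq_sum_smul_mapDomain, T_eq_sum_smul_mapDomain, DFunLike.coe_fn_eq,
    stmt14_general fun m _ => hq0 m]
  unfold applyMask
  simp only [mem_univ, forall_const, Finsupp.ext_iff, Finsupp.smul_apply, smul_eq_mul,
    mapDomain_equivFunOnFinite_symm_apply]
end
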